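/- For n ≥ 1, x > 0, and 0 ≤ β < 1, the second central moment of the Jain operator satisfies ∑_{k=0}^∞ (k/n − x)²·L_{n,k}^{(β)}(x) = x²β²/(1-β)² + x/(n(1-β)³). -/

import Mathlib

noncomputable def jainL (n : ℕ) (β x : ℝ) (k : ℕ) : ℝ :=
  n * x * ((n * x + k * β) ^ (k : ℕ) / (n * x + k * β)) / (Nat.factorial k) *
    Real.exp (-(n * x + k * β))

/-!
With `y = n x`, the basis functions are `q k y * exp (-(y + k β))`, where
`q k y = y (y + k β) ^ (k - 1) / k!` are normalized Abel polynomials.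

Since `q (k + 1)' y = q k (y + β)`, the defect `d y = 1 - ∑' k, q k y * exp (-(y + k β))` lies in
`[0, 1]` for `y ≥ 0`, vanishes at `0` and satisfies `d' y = d (y + β) - d y`. Hence
`d y - ∫ z in y..y + β, d z` is constant, so a bound `d ≤ M` improves to `d ≤ β M`, and `β < 1`
forces `d = 0`.

The moments come from Jain's sums `S r y = ∑' k, (y + k β) ^ (k + r) / k! * exp (-(y + k β))`.
Splitting off one factor `y + k β` gives `S 0 y = 1 + β S 0 (y + β)` and
`S (r + 1) y = y S r y + β S (r + 1) (y + β)`. Iterated term by term, these become sums over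
antidiagonals, so that `S 0 y = ∑' j, β ^ j` and
`S (r + 1) y = ∑' j, β ^ j (y + j β) S r (y + j β)`.
-/

open Real Finset
open scoped Nat

section Delay

variable {β : ℝ}

lemma sub_integral_eq_of_hasDerivAt_delay {E : Type*} [NormedAddCommGroup E] [NormedSpace ℝ E]
    [CompleteSpace E] {d : ℝ → E} (hd : ∀ y, HasDerivAt d (d (y + β) - d y) y) (y : ℝ) :
    d y - ∫ z in y..y + β, d z = d 0 - ∫ z in 0..β, d z := by
  have hcont : Continuous d := continuous_iff_continuousAt.2 fun y => (hd y).continuousAt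
  have hprim (y : ℝ) : HasDerivAt (fun y => ∫ z in 0..y, d z) (d y) y :=
    (hcont.integral_hasStrictDerivAt 0 y).hasDerivAt
  have hsplit (y : ℝ) :
      ∫ z in y..y + β, d z = (∫ z in 0..y + β, d z) - ∫ z in 0..y, d z :=
    (intervalIntegral.integral_interval_sub_left (hcont.intervalIntegrable _ _)
      (hcont.intervalIntegrable _ _)).symm
  have hderiv (y : ℝ) : HasDerivAt (fun y => d y - ∫ z in y..y + β, d z) 0 y := by
    simp only [hsplit]
    exact ((hd y).fun_sub (((hprim (y + β)).comp_add_const y β).fun_sub (hprim y))).congr_deriv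
      (sub_self _)
  simpa using is_const_of_deriv_eq_zero (fun y => (hderiv y).differentiableAt)
    (fun y => (hderiv y).deriv) y 0

variable {d : ℝ → ℝ} {M y : ℝ}

lemma le_mul_of_hasDerivAt_delay (hβ : 0 ≤ β) (hd : ∀ y, HasDerivAt d (d (y + β) - d y) y)
    (hd0 : d 0 = 0) (hnonneg : ∀ y, 0 ≤ y → 0 ≤ d y) (hM : ∀ y, 0 ≤ y → d y ≤ M) (hy : 0 ≤ y) :
    d y ≤ β * M := by
  have hcont : Continuous d := continuous_iff_continuousAt.2 fun y => (hd y).continuousAt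
  have hinit : 0 ≤ ∫ z in 0..β, d z :=
    intervalIntegral.integral_nonneg hβ fun z hz => hnonneg z hz.1
  calc d y = (∫ z in y..y + β, d z) - ∫ z in 0..β, d z := by
        linarith [sub_integral_eq_of_hasDerivAt_delay hd y]
    _ ≤ ∫ z in y..y + β, d z := by linarith
    _ ≤ ∫ _ in y..y + β, M :=
        intervalIntegral.integral_mono_on (by linarith) (hcont.intervalIntegrable _ _)
          intervalIntegrable_const fun z hz => hM z (hy.trans hz.1)
    _ = β * M := by simp

lemma eq_zero_of_hasDerivAt_delay (hβ : 0 ≤ β) (hβ1 : β < 1)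
    (hd : ∀ y, HasDerivAt d (d (y + β) - d y) y) (hd0 : d 0 = 0)
    (hnonneg : ∀ y, 0 ≤ y → 0 ≤ d y) (hM : ∀ y, 0 ≤ y → d y ≤ M) (hy : 0 ≤ y) : d y = 0 := by
  have hpow (N : ℕ) : ∀ y, 0 ≤ y → d y ≤ β ^ N * M := by
    induction N with
    | zero => simpa using hM
    | succ N ih =>
      intro y hy
      simpa only [pow_succ', mul_assoc] using
        le_mul_of_hasDerivAt_delay hβ hd hd0 hnonneg ih hy
  have hlim := (tendsto_pow_atTop_nhds_zero_of_lt_one hβ hβ1).mul_const M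
  rw [zero_mul] at hlim
  exact le_antisymm (ge_of_tendsto' hlim fun N => hpow N y hy) (hnonneg y hy)

end Delay

/-- The Abel polynomial `y (y + k β) ^ (k - 1)` divided by `k!`. The case `k = 0` is separate
because the value there is `1`, whereas truncated subtraction would give `y`. -/
noncomputable def abelPoly (β : ℝ) : ℕ → ℝ → ℝ
  | 0, _ => 1
  | k + 1, y => y * (y + (k + 1) * β) ^ k / (k + 1)!

section Abel

variable {β y Y : ℝ}

lemma abelPoly_zero (β y : ℝ) : abelPoly β 0 y = 1 := rfl

lemma abelPoly_succ_zero (β : ℝ) (k : ℕ) : abelPoly β (k + 1) 0 = 0 := by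
  simp [abelPoly]

lemma abelPoly_nonneg (hβ : 0 ≤ β) (hy : 0 ≤ y) (k : ℕ) : 0 ≤ abelPoly β k y := by
  cases k <;> simp only [abelPoly] <;> positivity

lemma abs_abelPoly_le (hβ : 0 ≤ β) (hy : |y| ≤ Y) (k : ℕ) : |abelPoly β k y| ≤ abelPoly β k Y := by
  cases k with
  | zero => simp [abelPoly]
  | succ k =>
    have hY : 0 ≤ Y := (abs_nonneg y).trans hy
    have hshift : |y + (k + 1) * β| ≤ Y + (k + 1) * β :=
      (abs_add_le _ _).trans (add_le_add hy (abs_of_nonneg (by positivity)).le)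
    simp only [abelPoly, abs_div, abs_mul, abs_pow, Nat.abs_cast]
    gcongr

lemma hasDerivAt_abelPoly_succ (β y : ℝ) (k : ℕ) :
    HasDerivAt (abelPoly β (k + 1)) (abelPoly β k (y + β)) y := by
  have hbase : HasDerivAt (fun y : ℝ => y + (k + 1) * β) 1 y := (hasDerivAt_id y).add_const _
  refine (((hasDerivAt_id y).mul (hbase.pow k)).div_const ((k + 1)! : ℝ)).congr_deriv ?_
  cases k with
  | zero => simp [abelPoly]
  | succ k =>
    simp only [abelPoly, Pi.pow_apply, id, Nat.factorial_succ (k + 1)]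
    push_cast
    field_simp
    ring

lemma hasDerivAt_sum_range_abelPoly (β y : ℝ) (N : ℕ) :
    HasDerivAt (fun y => ∑ k ∈ range (N + 1), abelPoly β k y * exp (-β) ^ k)
      (exp (-β) * ∑ k ∈ range N, abelPoly β k (y + β) * exp (-β) ^ k) y := by
  simp only [sum_range_succ' _ N, abelPoly_zero, pow_zero, mul_one]
  refine ((HasDerivAt.fun_sum fun k _ =>
    (hasDerivAt_abelPoly_succ β y k).mul_const (exp (-β) ^ (k + 1))).add_const 1).congr_deriv ?_
  rw [mul_sum]
  exact sum_congr rfl fun k _ => by ring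

lemma sum_range_abelPoly_le_exp (hβ : 0 ≤ β) (N : ℕ) :
    ∀ y, 0 ≤ y → ∑ k ∈ range N, abelPoly β k y * exp (-β) ^ k ≤ exp y := by
  induction N with
  | zero => intro y _; simpa using (exp_pos y).le
  | succ N ih =>
    intro y hy
    set P : ℝ → ℝ := fun y => ∑ k ∈ range (N + 1), abelPoly β k y * exp (-β) ^ k with hP
    have hderiv (z : ℝ) := (hasDerivAt_exp z).sub (hasDerivAt_sum_range_abelPoly β z N)
    have hmono : MonotoneOn (exp - P) (Set.Ici 0) := by
      refine monotoneOn_of_hasDerivWithinAt_nonneg (convex_Ici 0)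
        (fun z _ => (hderiv z).continuousAt.continuousWithinAt)
        (fun z _ => (hderiv z).hasDerivWithinAt) fun z hz => ?_
      have hz0 : 0 ≤ z := interior_subset hz
      rw [sub_nonneg]
      calc exp (-β) * ∑ k ∈ range N, abelPoly β k (z + β) * exp (-β) ^ k
          ≤ exp (-β) * exp (z + β) := by gcongr; exact ih _ (by positivity)
        _ = exp z := by rw [← exp_add]; congr 1; ring
    have hP0 : P 0 = 1 := by simp [hP, sum_range_succ', abelPoly_zero, abelPoly_succ_zero]
    have := hmono Set.self_mem_Ici hy hy
    simpa [hP0] using this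

lemma summable_abelPoly (hβ : 0 ≤ β) (y : ℝ) :
    Summable fun k => abelPoly β k y * exp (-β) ^ k := by
  have habs : Summable fun k => abelPoly β k |y| * exp (-β) ^ k :=
    summable_of_sum_range_le
      (fun k => mul_nonneg (abelPoly_nonneg hβ (abs_nonneg y) k) (by positivity))
      (fun N => sum_range_abelPoly_le_exp hβ N _ (abs_nonneg y))
  refine habs.of_norm_bounded fun k => ?_
  rw [norm_mul, norm_of_nonneg (by positivity : 0 ≤ exp (-β) ^ k)]
  gcongr
  exact abs_abelPoly_le hβ le_rfl k

lemma hasDerivAt_tsum_abelPoly (hβ : 0 ≤ β) (y : ℝ) :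
    HasDerivAt (fun y => ∑' k, abelPoly β k y * exp (-β) ^ k)
      (exp (-β) * ∑' k, abelPoly β k (y + β) * exp (-β) ^ k) y := by
  have hy : y ∈ Metric.ball (0 : ℝ) (|y| + 1) := by simp
  have htail := hasDerivAt_tsum_of_isPreconnected
    (g := fun k z => abelPoly β (k + 1) z * exp (-β) ^ (k + 1))
    (g' := fun k z => abelPoly β k (z + β) * exp (-β) ^ (k + 1))
    (u := fun k => exp (-β) * (abelPoly β k (|y| + 1 + β) * exp (-β) ^ k))
    ((summable_abelPoly hβ _).mul_left _) Metric.isOpen_ball (convex_ball _ _).isPreconnected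
    (fun k z _ => (hasDerivAt_abelPoly_succ β z k).mul_const _)
    (fun k z hz => by
      have hzβ : |z + β| ≤ |y| + 1 + β :=
        (abs_add_le z β).trans (add_le_add (mem_ball_zero_iff.1 hz).le (abs_of_nonneg hβ).le)
      rw [norm_mul, norm_of_nonneg (by positivity : 0 ≤ exp (-β) ^ (k + 1)), pow_succ',
        mul_left_comm]
      gcongr
      exact abs_abelPoly_le hβ hzβ k)
    hy ((summable_nat_add_iff 1).2 (summable_abelPoly hβ y)) hy
  have hsplit (z : ℝ) : ∑' k, abelPoly β k z * exp (-β) ^ k =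
      1 + ∑' k, abelPoly β (k + 1) z * exp (-β) ^ (k + 1) := by
    simpa [abelPoly_zero] using (summable_abelPoly hβ z).tsum_eq_zero_add
  simp only [hsplit]
  refine (htail.const_add 1).congr_deriv ?_
  rw [← hsplit, ← tsum_mul_left]
  exact tsum_congr fun k => by ring

theorem hasSum_abelPoly (hβ : 0 ≤ β) (hβ1 : β < 1) (hy : 0 ≤ y) :
    HasSum (fun k => abelPoly β k y * exp (-β) ^ k) (exp y) := by
  set S : ℝ → ℝ := fun y => ∑' k, abelPoly β k y * exp (-β) ^ k with hS
  have hS_nonneg (z : ℝ) (hz : 0 ≤ z) : 0 ≤ S z :=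
    tsum_nonneg fun k => mul_nonneg (abelPoly_nonneg hβ hz k) (by positivity)
  have hS_le (z : ℝ) (hz : 0 ≤ z) : S z ≤ exp z :=
    (summable_abelPoly hβ z).tsum_le_of_sum_range_le fun N => sum_range_abelPoly_le_exp hβ N z hz
  have hS0 : S 0 = 1 := by
    simp [hS, (summable_abelPoly hβ 0).tsum_eq_zero_add, abelPoly_zero, abelPoly_succ_zero]
  have hderiv (z : ℝ) : HasDerivAt (fun z => 1 - exp (-z) * S z)
      ((1 - exp (-(z + β)) * S (z + β)) - (1 - exp (-z) * S z)) z := by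
    refine (((hasDerivAt_neg z).exp.fun_mul
      (hasDerivAt_tsum_abelPoly hβ z)).const_sub 1).congr_deriv ?_
    simp only [hS, neg_add, exp_add]
    ring
  have hdefect : 1 - exp (-y) * S y = 0 := by
    refine eq_zero_of_hasDerivAt_delay (d := fun z => 1 - exp (-z) * S z) (M := 1) hβ hβ1
      hderiv (by simp [hS0]) (fun z hz => ?_) (fun z hz => ?_) hy
    · have := mul_le_mul_of_nonneg_left (hS_le z hz) (exp_pos (-z)).le
      rw [← exp_add, neg_add_cancel, exp_zero] at this
      linarith
    · linarith [mul_nonneg (exp_pos (-z)).le (hS_nonneg z hz)]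
  have hSy : S y = exp y := by
    rw [exp_neg] at hdefect
    field_simp at hdefect
    linarith
  exact hSy ▸ (summable_abelPoly hβ y).hasSum

end Abel

lemma hasSum_sum_antidiagonal_of_nonneg {A : Type*} [AddCommMonoid A] [HasAntidiagonal A]
    {f : A × A → ℝ} {r : A → ℝ} {s : ℝ} (hf : 0 ≤ f)
    (hr : ∀ i, HasSum (fun j => f (i, j)) (r i)) (hs : HasSum r s) :
    HasSum (fun n => ∑ p ∈ antidiagonal n, f p) s := by
  have hsummable : Summable f := (summable_prod_of_nonneg hf).2
    ⟨fun i => (hr i).summable, by simpa only [(hr _).tsum_eq] using hs.summable⟩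
  have hsum : HasSum f s :=
    (hsummable.hasSum.prod_fiberwise hr).unique hs ▸ hsummable.hasSum
  refine (HasAntidiagonal.sigmaAntidiagonalEquivProd.hasSum_iff.2 hsum).sigma fun n => ?_
  exact (antidiagonal n).hasSum f

lemma hasSum_of_delay_recursion {a c : ℕ → ℝ → ℝ} {r : ℕ → ℝ} {β y s : ℝ} (hβ : 0 ≤ β)
    (hc : ∀ k i : ℕ, 0 ≤ c k (y + i * β)) (ha_zero : ∀ y, a 0 y = c 0 y)
    (ha_succ : ∀ k y, a (k + 1) y = c (k + 1) y + β * a k (y + β))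
    (hr : ∀ i : ℕ, HasSum (fun k => c k (y + i * β)) (r i))
    (hs : HasSum (fun i => β ^ i * r i) s) : HasSum (fun k => a k y) s := by
  have hunfold (k : ℕ) :
      ∀ y, a k y = ∑ p ∈ antidiagonal k, β ^ p.1 * c p.2 (y + p.1 * β) := by
    induction k with
    | zero => simp [ha_zero]
    | succ k ih =>
      intro y
      rw [ha_succ, ih, Nat.sum_antidiagonal_succ, mul_sum]
      congr 1
      · simp
      · refine sum_congr rfl fun p _ => ?_
        have hshift : y + (p.1 + 1 : ℕ) * β = y + β + p.1 * β := by push_cast; ring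
        rw [pow_succ', mul_assoc, hshift]
  simp only [hunfold]
  exact hasSum_sum_antidiagonal_of_nonneg (fun p => mul_nonneg (pow_nonneg hβ _) (hc _ _))
    (fun i => (hr i).mul_left (β ^ i)) hs

/-- The Jain basis function `L_{n,k}^{(β)}(x)` as a function of `y = n x`. -/
noncomputable def jainWeight (β : ℝ) (k : ℕ) (y : ℝ) : ℝ :=
  abelPoly β k y * exp (-(y + k * β))

/-- The `k`-th term of Jain's auxiliary sum
`S(r + 1, y, β) = ∑' k, (y + k β) ^ (k + r) / k! * exp (-(y + k β))`. The index is shifted by one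
so that the exponent is a natural number; Jain's `y S(0, y, β)` is the sum of the
`jainWeight β k y`. -/
noncomputable def jainTerm (β : ℝ) (r k : ℕ) (y : ℝ) : ℝ :=
  (y + k * β) ^ (k + r) / k ! * exp (-(y + k * β))

lemma jainWeight_zero (β y : ℝ) : jainWeight β 0 y = exp (-y) := by
  simp [jainWeight, abelPoly_zero]

lemma succ_mul_jainWeight_succ (β y : ℝ) (k : ℕ) :
    (k + 1 : ℕ) * jainWeight β (k + 1) y = y * jainTerm β 0 k (y + β) := by
  have hshift : y + β + k * β = y + (k + 1) * β := by ring
  simp only [jainWeight, jainTerm, abelPoly, hshift, Nat.factorial_succ]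
  push_cast
  field_simp
  simp

lemma succ_mul_jainTerm_succ (β y : ℝ) (r k : ℕ) :
    (k + 1 : ℕ) * jainTerm β r (k + 1) y = jainTerm β (r + 1) k (y + β) := by
  have hshift : y + β + k * β = y + (k + 1) * β := by ring
  simp only [jainTerm, hshift, Nat.factorial_succ]
  push_cast
  field_simp
  ring

lemma jainTerm_zero_zero (β y : ℝ) : jainTerm β 0 0 y = jainWeight β 0 y := by
  simp [jainTerm, jainWeight_zero]

lemma jainTerm_zero_succ (β y : ℝ) (k : ℕ) :
    jainTerm β 0 (k + 1) y = jainWeight β (k + 1) y + β * jainTerm β 0 k (y + β) := by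
  have hshift : y + β + k * β = y + (k + 1) * β := by ring
  simp only [jainTerm, jainWeight, abelPoly, hshift, Nat.factorial_succ]
  push_cast
  field_simp
  ring

lemma jainTerm_succ_zero (β y : ℝ) (r : ℕ) :
    jainTerm β (r + 1) 0 y = y * jainTerm β r 0 y := by
  simp [jainTerm, pow_succ', mul_assoc]

lemma jainTerm_succ_succ (β y : ℝ) (r k : ℕ) :
    jainTerm β (r + 1) (k + 1) y =
      y * jainTerm β r (k + 1) y + β * jainTerm β (r + 1) k (y + β) := by
  have hsplit : jainTerm β (r + 1) (k + 1) y = (y + (k + 1 : ℕ) * β) * jainTerm β r (k + 1) y := by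
    simp only [jainTerm]
    ring
  rw [hsplit, ← succ_mul_jainTerm_succ]
  ring

section Moments

variable {β y : ℝ}

lemma jainWeight_nonneg (hβ : 0 ≤ β) (hy : 0 ≤ y) (k : ℕ) : 0 ≤ jainWeight β k y :=
  mul_nonneg (abelPoly_nonneg hβ hy k) (exp_pos _).le

lemma jainTerm_nonneg (hβ : 0 ≤ β) (hy : 0 ≤ y) (r k : ℕ) : 0 ≤ jainTerm β r k y := by
  unfold jainTerm
  positivity

theorem hasSum_jainWeight (hβ : 0 ≤ β) (hβ1 : β < 1) (hy : 0 ≤ y) :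
    HasSum (fun k => jainWeight β k y) 1 := by
  have h := (hasSum_abelPoly hβ hβ1 hy).mul_left (exp (-y))
  rw [← exp_add, neg_add_cancel, exp_zero] at h
  refine h.congr_fun fun k => ?_
  rw [jainWeight, neg_add, exp_add, ← exp_nat_mul, mul_neg]
  ring

theorem hasSum_jainTerm_zero (hβ : 0 ≤ β) (hβ1 : β < 1) (hy : 0 ≤ y) :
    HasSum (fun k => jainTerm β 0 k y) (1 - β)⁻¹ :=
  hasSum_of_delay_recursion (r := fun _ => 1) hβ
    (fun k i => jainWeight_nonneg hβ (by positivity) k) (jainTerm_zero_zero β)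
    (fun k y => jainTerm_zero_succ β y k) (fun i => hasSum_jainWeight hβ hβ1 (by positivity))
    (by simpa using hasSum_geometric_of_lt_one hβ hβ1)

lemma hasSum_jainTerm_succ {r : ℕ} {S : ℕ → ℝ} {s : ℝ} (hβ : 0 ≤ β) (hy : 0 ≤ y)
    (hS : ∀ i : ℕ, HasSum (fun k => jainTerm β r k (y + i * β)) (S i))
    (hs : HasSum (fun i : ℕ => β ^ i * ((y + i * β) * S i)) s) :
    HasSum (fun k => jainTerm β (r + 1) k y) s :=
  hasSum_of_delay_recursion (c := fun k y => y * jainTerm β r k y) hβ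
    (fun k i => mul_nonneg (by positivity) (jainTerm_nonneg hβ (by positivity) r k))
    (fun y => jainTerm_succ_zero β y r) (fun k y => jainTerm_succ_succ β y r k)
    (fun i => (hS i).mul_left _) hs

theorem hasSum_jainTerm_one (hβ : 0 ≤ β) (hβ1 : β < 1) (hy : 0 ≤ y) :
    HasSum (fun k => jainTerm β 1 k y) (y / (1 - β) ^ 2 + β ^ 2 / (1 - β) ^ 3) := by
  have hβ_ne : 1 - β ≠ 0 := sub_ne_zero.2 hβ1.ne'
  have hgeom := (hasSum_geometric_of_lt_one hβ hβ1).mul_left (y / (1 - β))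
  have harith := (hasSum_coe_mul_geometric_of_norm_lt_one
    (show ‖β‖ < 1 by rwa [norm_of_nonneg hβ])).mul_left (β / (1 - β))
  refine hasSum_jainTerm_succ hβ hy
    (fun i => hasSum_jainTerm_zero hβ hβ1 (by positivity)) ?_
  convert! hgeom.add harith using 1
  · ext i
    ring
  · field_simp

lemma hasSum_natCast_mul_iff {R : Type*} [Ring R] [TopologicalSpace R] [IsTopologicalAddGroup R]
    {a : ℕ → R} {s : R} :
    HasSum (fun k : ℕ => k * a k) s ↔ HasSum (fun k : ℕ => (k + 1 : ℕ) * a (k + 1)) s := by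
  simpa using (hasSum_nat_add_iff' (f := fun k : ℕ => k * a k) (g := s) 1).symm

theorem hasSum_natCast_mul_jainWeight (hβ : 0 ≤ β) (hβ1 : β < 1) (hy : 0 ≤ y) :
    HasSum (fun k : ℕ => k * jainWeight β k y) (y / (1 - β)) := by
  simp only [hasSum_natCast_mul_iff, succ_mul_jainWeight_succ]
  exact (hasSum_jainTerm_zero hβ hβ1 (by positivity)).mul_left y

lemma hasSum_natCast_mul_jainTerm_zero (hβ : 0 ≤ β) (hβ1 : β < 1) (hy : 0 ≤ y) :
    HasSum (fun k : ℕ => k * jainTerm β 0 k y)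
      ((y + β) / (1 - β) ^ 2 + β ^ 2 / (1 - β) ^ 3) := by
  simp only [hasSum_natCast_mul_iff, succ_mul_jainTerm_succ]
  exact hasSum_jainTerm_one hβ hβ1 (by positivity)

theorem hasSum_natCast_sq_mul_jainWeight (hβ : 0 ≤ β) (hβ1 : β < 1) (hy : 0 ≤ y) :
    HasSum (fun k : ℕ => k ^ 2 * jainWeight β k y)
      (y ^ 2 / (1 - β) ^ 2 + y / (1 - β) ^ 3) := by
  have hβ_ne : 1 - β ≠ 0 := sub_ne_zero.2 hβ1.ne'
  have hyβ : 0 ≤ y + β := by positivity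
  have h := ((hasSum_natCast_mul_jainTerm_zero hβ hβ1 hyβ).add
    (hasSum_jainTerm_zero hβ hβ1 hyβ)).mul_left y
  simp only [sq, mul_assoc, hasSum_natCast_mul_iff, succ_mul_jainWeight_succ]
  convert! h using 1
  · ext k
    push_cast
    ring
  · field_simp
    ring

theorem hasSum_sub_sq_mul_jainWeight (hβ : 0 ≤ β) (hβ1 : β < 1) (hy : 0 ≤ y) :
    HasSum (fun k : ℕ => (k - y) ^ 2 * jainWeight β k y)
      (y ^ 2 * β ^ 2 / (1 - β) ^ 2 + y / (1 - β) ^ 3) := by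
  have hβ_ne : 1 - β ≠ 0 := sub_ne_zero.2 hβ1.ne'
  have h := ((hasSum_natCast_sq_mul_jainWeight hβ hβ1 hy).sub
    ((hasSum_natCast_mul_jainWeight hβ hβ1 hy).mul_left (2 * y))).add
    ((hasSum_jainWeight hβ hβ1 hy).mul_left (y ^ 2))
  convert! h using 1
  · ext k
    ring
  · field_simp
    ring

end Moments

lemma jainL_eq_jainWeight {n : ℕ} {β x : ℝ} (hβ : 0 ≤ β) (hnx : 0 < n * x) (k : ℕ) :
    jainL n β x k = jainWeight β k (n * x) := by
  cases k with
  | zero => simp [jainL, jainWeight_zero, -mul_inv_rev, mul_inv_cancel₀ hnx.ne']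
  | succ k =>
    have hbase : n * x + (k + 1) * β ≠ 0 := by positivity
    simp only [jainL, jainWeight, abelPoly, Nat.cast_succ]
    rw [pow_succ, mul_div_cancel_right₀ _ hbase]

theorem jain_second_central_moment (n : ℕ) (hn : 1 ≤ n) (x β : ℝ)
    (hx : 0 < x) (hβ0 : 0 ≤ β) (hβ1 : β < 1) :
    HasSum (fun k : ℕ => ((k / n : ℝ) - x) ^ 2 * jainL n β x k)
      (x ^ 2 * β ^ 2 / (1 - β) ^ 2 + x / (n * (1 - β) ^ 3)) := by
  have hn0 : (0 : ℝ) < n := by exact_mod_cast hn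
  have hnx : 0 < n * x := mul_pos hn0 hx
  have hβ_ne : 1 - β ≠ 0 := sub_ne_zero.2 hβ1.ne'
  simp only [jainL_eq_jainWeight hβ0 hnx]
  convert! (hasSum_sub_sq_mul_jainWeight hβ0 hβ1 hnx.le).div_const ((n : ℝ) ^ 2) using 1
  · ext k
    field_simp
  · field_simp
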